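/- arXiv:1309.0595 — 3 statements merged into one kernel-verified Lean document; each statement's English description precedes it below -/
import Mathlib

section
/- Let p > 1 be real, set c(p) := p^p (p−1)^{1−p}, and let ν(p,0) be the unique probability measure supported in [0, c(p)] with moments ∫ x^n dν(p,0)(x) = C(np, n) for all n. Then the measure (1/p)·δ₀ + ((p−1)/p)·ν(p,0), where δ₀ is the Dirac measure at 0, is a probability measure whose n-th moment equals C(np − 1, n) for every natural number n. -/
open MeasureTheory Real

/-- Generalized binomial coefficient `C(a,n) = a(a-1)⋯(a-n+1)/n!`. -/
noncomputable def gbinom (a : ℝ) (n : ℕ) : ℝ :=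
  (∏ i ∈ Finset.range n, (a - i)) / (n.factorial : ℝ)

/-!
The absorption identity `a * C(a - 1, n) = (a - n) * C(a, n)` at `a = n * p` shows that
`C(n * p - 1, n)` is the constant multiple `(p - 1) / p` of `C(n * p, n)` for every `n ≠ 0`. An atom
at `0` contributes to no moment of positive order, so scaling `ν` by this constant and putting the
missing mass `1 / p` at `0` produces the required moments.
-/

theorem gbinom_eq_descPochhammer_eval_div (a : ℝ) (n : ℕ) :
    gbinom a n = (descPochhammer ℝ n).eval a / n.factorial := by
  rw [gbinom, descPochhammer_eval_eq_prod_range]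

theorem gbinom_zero_right (a : ℝ) : gbinom a 0 = 1 := by
  simp [gbinom]

theorem gbinom_pos {a : ℝ} {n : ℕ} (h : n - 1 < a) : 0 < gbinom a n := by
  rw [gbinom_eq_descPochhammer_eval_div]
  exact div_pos (descPochhammer_pos h) (by positivity)

theorem mul_gbinom_sub_one (a : ℝ) (n : ℕ) : a * gbinom (a - 1) n = (a - n) * gbinom a n := by
  have descPochhammer_absorption :
      a * (descPochhammer ℝ n).eval (a - 1) = (descPochhammer ℝ n).eval a * (a - n) := by
    rw [← descPochhammer_succ_eval, descPochhammer_succ_left]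
    simp
  rw [gbinom_eq_descPochhammer_eval_div, gbinom_eq_descPochhammer_eval_div, ← mul_div_assoc,
    descPochhammer_absorption, mul_comm, mul_div_assoc]

theorem gbinom_natCast_mul_sub_one {p : ℝ} (hp : p ≠ 0) {n : ℕ} (hn : n ≠ 0) :
    gbinom (n * p - 1) n = (p - 1) / p * gbinom (n * p) n := by
  have hn' : (n : ℝ) ≠ 0 := Nat.cast_ne_zero.mpr hn
  refine mul_left_cancel₀ (mul_ne_zero hn' hp) ?_
  calc n * p * gbinom (n * p - 1) n
      = (n * p - n) * gbinom (n * p) n := mul_gbinom_sub_one _ n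
    _ = n * p * ((p - 1) / p * gbinom (n * p) n) := by field_simp

theorem gbinom_natCast_mul_pos {p : ℝ} (hp : 1 ≤ p) (n : ℕ) : 0 < gbinom (n * p) n := by
  have : (n : ℝ) ≤ n * p := le_mul_of_one_le_right n.cast_nonneg hp
  exact gbinom_pos (by linarith)

section Mixture

variable {α : Type*} [MeasurableSpace α] {μ ν : Measure α} {s t : ℝ}

theorem isProbabilityMeasure_ofReal_smul_add_ofReal_smul
    [IsProbabilityMeasure μ] [IsProbabilityMeasure ν] (hs : 0 ≤ s) (ht : 0 ≤ t) (hst : s + t = 1) :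
    IsProbabilityMeasure (ENNReal.ofReal s • μ + ENNReal.ofReal t • ν) where
  measure_univ := by simp [← ENNReal.ofReal_add hs ht, hst]

theorem integral_ofReal_smul_add_ofReal_smul {E : Type*} [NormedAddCommGroup E] [NormedSpace ℝ E]
    {f : α → E} (hs : 0 ≤ s) (ht : 0 ≤ t) (hμ : Integrable f μ) (hν : Integrable f ν) :
    ∫ x, f x ∂(ENNReal.ofReal s • μ + ENNReal.ofReal t • ν)
      = s • ∫ x, f x ∂μ + t • ∫ x, f x ∂ν := by
  rw [integral_add_measure (hμ.smul_measure ENNReal.ofReal_ne_top)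
    (hν.smul_measure ENNReal.ofReal_ne_top), integral_smul_measure, integral_smul_measure,
    ENNReal.toReal_ofReal hs, ENNReal.toReal_ofReal ht]

end Mixture

theorem nu_p_minus_one_general {p : ℝ} (hp : 1 ≤ p) (ν : Measure ℝ) [IsProbabilityMeasure ν]
    (hmom : ∀ n : ℕ, ∫ x, x ^ n ∂ν = gbinom (n * p) n) :
    IsProbabilityMeasure
        (ENNReal.ofReal (1 / p) • Measure.dirac (0 : ℝ) + ENNReal.ofReal ((p - 1) / p) • ν) ∧
      ∀ n : ℕ, ∫ x, x ^ n
          ∂(ENNReal.ofReal (1 / p) • Measure.dirac (0 : ℝ) + ENNReal.ofReal ((p - 1) / p) • ν)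
        = gbinom (n * p - 1) n := by
  have hp0 : 0 < p := by linarith
  have hs : 0 ≤ 1 / p := by positivity
  have ht : 0 ≤ (p - 1) / p := div_nonneg (by linarith) hp0.le
  have hst : 1 / p + (p - 1) / p = 1 := by field_simp; ring
  refine ⟨isProbabilityMeasure_ofReal_smul_add_ofReal_smul hs ht hst, fun n ↦ ?_⟩
  -- The integral of a non-integrable function is `0`, whereas the moments of `ν` are positive.
  have hint : Integrable (fun x : ℝ ↦ x ^ n) ν :=
    .of_integral_ne_zero (by rw [hmom]; exact (gbinom_natCast_mul_pos hp n).ne')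
  rw [integral_ofReal_smul_add_ofReal_smul hs ht (integrable_dirac (by simp)) hint,
    integral_dirac, hmom, smul_eq_mul, smul_eq_mul]
  obtain rfl | hn := eq_or_ne n 0
  · simpa only [gbinom_zero_right, pow_zero, mul_one] using hst
  · rw [zero_pow hn, mul_zero, zero_add, gbinom_natCast_mul_sub_one hp0.ne' hn]

theorem nu_p_minus_one (p : ℝ) (hp : 1 < p) (ν : Measure ℝ)
    (hprob : IsProbabilityMeasure ν)
    (hsupp : ν (Set.Icc 0 (p ^ p * (p - 1) ^ (1 - p)))ᶜ = 0)
    (hmom : ∀ n : ℕ, (∫ x, x ^ n ∂ν) = gbinom ((n : ℝ) * p) n) :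
    ∀ μ : Measure ℝ,
      μ = ENNReal.ofReal (1 / p) • Measure.dirac (0 : ℝ)
            + ENNReal.ofReal ((p - 1) / p) • ν →
      IsProbabilityMeasure μ ∧
      ∀ n : ℕ, (∫ x, x ^ n ∂μ) = gbinom ((n : ℝ) * p - 1) n := by
  rintro μ rfl
  exact nu_p_minus_one_general hp.le ν hmom
end

section
/- Let p > 1 be real, set c(p) := p^p (p−1)^{1−p}, and let ν(p,0) be the unique probability measure supported in [0, c(p)] with moments ∫ x^n dν(p,0)(x) = C(np, n) for all n. Then the measure μ defined by μ(A) := ∫_A (x/p) dν(p,0)(x) is a probability measure whose n-th moment equals C(np + p − 1, n) for every natural number n. -/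
open MeasureTheory Real

/-! Multiplying `ν` by `x / p` turns its moments `mₙ` into `mₙ₊₁ / p`, and the absorption identity
`C(a, n + 1) = a / (n + 1) * C(a - 1, n)` at `a = (n + 1) p` gives
`C((n + 1) p, n + 1) / p = C(n p + p - 1, n)`. Unit mass is the moment `n = 0`. -/

theorem gbinom_eq_choose (a : ℝ) (n : ℕ) : gbinom a n = Ring.choose a n := by
  rw [gbinom, Ring.choose_eq_smul, ← descPochhammer_eval_eq_prod_range,
    ← Polynomial.aeval_eq_smeval, ← Polynomial.eval_map_algebraMap, descPochhammer_map,
    smul_eq_mul, div_eq_inv_mul]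

theorem gbinom_succ_right (a : ℝ) (n : ℕ) :
    gbinom a (n + 1) = a / (n + 1) * gbinom (a - 1) n := by
  have absorption : (n + 1) * Ring.choose a (n + 1) = a * Ring.choose (a - 1) n := by
    simpa using Ring.choose_smul_choose a (Nat.le_add_left 1 n)
  rw [gbinom_eq_choose, gbinom_eq_choose, div_mul_eq_mul_div,
    eq_div_iff n.cast_add_one_ne_zero, mul_comm, absorption]

theorem gbinom_succ_mul_succ (p : ℝ) (n : ℕ) :
    gbinom ((n + 1 : ℕ) * p) (n + 1) = p * gbinom (n * p + p - 1) n := by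
  rw [gbinom_succ_right, Nat.cast_add_one, mul_div_cancel_left₀ p n.cast_add_one_ne_zero,
    add_one_mul]

theorem integral_withDensity_ofReal {α E : Type*} [MeasurableSpace α] [NormedAddCommGroup E]
    [NormedSpace ℝ E] {ν : Measure α} {g : α → ℝ} (hg : AEMeasurable g ν) (hg₀ : 0 ≤ᵐ[ν] g)
    (f : α → E) :
    ∫ x, f x ∂ν.withDensity (fun x => ENNReal.ofReal (g x)) = ∫ x, g x • f x ∂ν := by
  rw [integral_withDensity_eq_integral_toReal_smul₀ hg.ennreal_ofReal
    (ae_of_all ν fun _ => ENNReal.ofReal_lt_top)]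
  refine integral_congr_ae ?_
  filter_upwards [hg₀] with x hx
  rw [ENNReal.toReal_ofReal hx]

theorem integral_pow_withDensity_div {ν : Measure ℝ} (hν : ∀ᵐ x ∂ν, 0 ≤ x) {c : ℝ} (hc : 0 ≤ c)
    (n : ℕ) :
    ∫ x, x ^ n ∂ν.withDensity (fun x => ENNReal.ofReal (x / c)) = (∫ x, x ^ (n + 1) ∂ν) / c := by
  have hdensity : 0 ≤ᵐ[ν] fun x => x / c := hν.mono fun x hx => div_nonneg hx hc
  rw [integral_withDensity_ofReal (by fun_prop) hdensity, ← integral_div]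
  congr with x
  rw [smul_eq_mul, pow_succ', div_mul_eq_mul_div]

theorem nu_p_pminusone (p : ℝ) (hp : 1 < p) (ν : Measure ℝ)
    (hprob : IsProbabilityMeasure ν)
    (hsupp : ν (Set.Icc 0 (p ^ p * (p - 1) ^ (1 - p)))ᶜ = 0)
    (hmom : ∀ n : ℕ, (∫ x, x ^ n ∂ν) = gbinom ((n : ℝ) * p) n) :
    ∀ μ : Measure ℝ,
      μ = ν.withDensity (fun x => ENNReal.ofReal (x / p)) →
      IsProbabilityMeasure μ ∧
      ∀ n : ℕ, (∫ x, x ^ n ∂μ) = gbinom ((n : ℝ) * p + p - 1) n := by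
  intro μ hμ
  have hp₀ : 0 < p := one_pos.trans hp
  have hν : ∀ᵐ x ∂ν, 0 ≤ x := (ae_iff.mpr hsupp).mono fun _ hx => hx.1
  have moments (n : ℕ) : ∫ x, x ^ n ∂μ = gbinom (n * p + p - 1) n := by
    rw [hμ, integral_pow_withDensity_div hν hp₀.le, hmom, gbinom_succ_mul_succ,
      mul_div_cancel_left₀ _ hp₀.ne']
  have mass : μ.real Set.univ = 1 := by
    simpa [gbinom_zero_right] using moments 0
  exact ⟨isProbabilityMeasure_iff_real.mpr mass, moments⟩
end

section
/- Define, for 0 < x < √(27)/2 and z := 4x²/27, the function V(x) := (1+√(1−z))^{1/3} · z^{−1/6} / (3π√(1−z)) + (1+√(1−z))^{−1/3} · z^{1/6} / (3π√(1−z)). Then for every natural number n, ∫₀^{√(27)/2} x^n V(x) dx = C(3n/2, n); in particular V is a probability density on (0, √(27)/2). -/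
open MeasureTheory Real

/-- The density function `V_{3/2,0}` of the measure `ν(3/2,0)`. -/
noncomputable def V320 (x : ℝ) : ℝ :=
  (1 + Real.sqrt (1 - 4 * x ^ 2 / 27)) ^ ((1:ℝ)/3) * (4 * x ^ 2 / 27) ^ (-(1:ℝ)/6)
      / (3 * Real.pi * Real.sqrt (1 - 4 * x ^ 2 / 27))
    + (1 + Real.sqrt (1 - 4 * x ^ 2 / 27)) ^ (-(1:ℝ)/3) * (4 * x ^ 2 / 27) ^ ((1:ℝ)/6)
      / (3 * Real.pi * Real.sqrt (1 - 4 * x ^ 2 / 27))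

/-! Put `x = √(27 p (1 - p))` with `0 < p < 1/2`. Then `√(1 - 4x²/27) = 1 - 2p`, and `x ^ s V(x) dx`
becomes a constant times `k(p) + k(1 - p)`, where `k` is the beta integrand with parameters
`s/2 + 2/3` and `s/2 + 1/3`. The two summands together integrate `k` over all of `(0, 1)`, so the
moment of order `s` is a multiple of `Γ(s/2 + 1/3) Γ(s/2 + 2/3) / Γ(s + 1)`. The triplication
formula, obtained from the Bohr–Mollerup characterisation of `Γ`, rewrites this as
`Γ(3s/2 + 1) / (Γ(s + 1) Γ(s/2 + 1))`, which is `C(3s/2, s)`.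
-/

lemma convexOn_log_Gamma_add_div {m c : ℝ} (hm : 0 < m) (hc : 0 ≤ c) :
    ConvexOn ℝ (Set.Ioi 0) fun s ↦ log (Gamma ((s + c) / m)) := by
  refine ⟨convex_Ioi 0, fun x (hx : 0 < x) y (hy : 0 < y) a b ha hb hab ↦ ?_⟩
  have hcomb : (a • x + b • y + c) / m = a • ((x + c) / m) + b • ((y + c) / m) := by
    simp only [smul_eq_mul]
    linear_combination (-c / m) * hab
  simpa only [Function.comp_apply, ← hcomb] using
    convexOn_log_Gamma.2 (show 0 < (x + c) / m by positivity) (show 0 < (y + c) / m by positivity)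
      ha hb hab

lemma convexOn_sum_log_Gamma_add_div (m : ℕ) :
    ConvexOn ℝ (Set.Ioi 0) fun s ↦ ∑ k ∈ Finset.range m, log (Gamma ((s + k) / m)) := by
  have h := Finset.sum_induction (fun (k : ℕ) (s : ℝ) ↦ log (Gamma ((s + k) / m)))
    (ConvexOn ℝ (Set.Ioi 0)) (s := Finset.range m) (fun _ _ ↦ ConvexOn.add)
    (convexOn_const 0 (convex_Ioi 0))
    fun k hk ↦ convexOn_log_Gamma_add_div
      (Nat.cast_pos.2 (k.zero_le.trans_lt (Finset.mem_range.1 hk))) k.cast_nonneg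
  simpa only [Finset.sum_fn] using h

lemma prod_Gamma_add_one_add_div {m : ℕ} (hm : m ≠ 0) {s : ℝ} (hs : s ≠ 0) :
    ∏ k ∈ Finset.range m, Gamma ((s + 1 + k) / m)
      = s / m * ∏ k ∈ Finset.range m, Gamma ((s + k) / m) := by
  obtain ⟨n, rfl⟩ := Nat.exists_eq_succ_of_ne_zero hm
  have hn : ((n.succ : ℕ) : ℝ) ≠ 0 := by positivity
  have hlast : Gamma ((s + 1 + n) / n.succ) = s / n.succ * Gamma (s / n.succ) := by
    rw [← Gamma_add_one (div_ne_zero hs hn), div_add_one hn, Nat.cast_succ, add_assoc, add_comm 1]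
  rw [Finset.prod_range_succ, hlast, Finset.prod_range_succ']
  simp only [Nat.cast_add_one, Nat.cast_zero, add_zero, add_assoc, add_comm (1 : ℝ)]
  ring

/-- Gauss's multiplication formula; the product on the right is `(2π) ^ ((m - 1) / 2) / √m`. -/
theorem prod_Gamma_add_div {m : ℕ} (hm : m ≠ 0) {s : ℝ} (hs : 0 < s) :
    ∏ k ∈ Finset.range m, Gamma ((s + k) / m)
      = (m : ℝ) ^ (1 - s) * Gamma s * ∏ k ∈ Finset.range m, Gamma ((1 + k) / m) := by
  have hm' : (0 : ℝ) < m := by positivity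
  let P : ℝ → ℝ := fun s ↦ ∏ k ∈ Finset.range m, Gamma ((s + k) / m)
  have hP {s : ℝ} (hs : 0 < s) : 0 < P s :=
    Finset.prod_pos fun k _ ↦ Gamma_pos_of_pos (by positivity)
  let f : ℝ → ℝ := fun s ↦ (m : ℝ) ^ (s - 1) * P s / P 1
  have hlog : Set.EqOn (fun s ↦ ∑ k ∈ Finset.range m, log (Gamma ((s + k) / m)) + log m * s
      + (-log m - log (P 1))) (log ∘ f) (Set.Ioi 0) := by
    intro s (hs : 0 < s)
    have hΓ (k : ℕ) : Gamma ((s + k) / m) ≠ 0 := (Gamma_pos_of_pos (by positivity)).ne'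
    simp only [f, Function.comp_apply]
    rw [log_div (mul_pos (by positivity) (hP hs)).ne' (hP one_pos).ne',
      log_mul (by positivity) (hP hs).ne', log_rpow hm', log_prod fun k _ ↦ hΓ k]
    ring
  have hconv : ConvexOn ℝ (Set.Ioi 0) (log ∘ f) :=
    (((convexOn_sum_log_Gamma_add_div m).add
      ((convexOn_id (convex_Ioi 0)).smul (log_natCast_nonneg m))).add_const _).congr hlog
  have hstep {y : ℝ} (hy : 0 < y) : f (y + 1) = y * f y := by
    simp only [f, P]
    rw [prod_Gamma_add_one_add_div hm hy.ne', add_sub_right_comm, rpow_add_one hm'.ne']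
    field_simp
  have hf : f s = Gamma s := eq_Gamma_of_log_convex hconv hstep
    (fun hy ↦ div_pos (mul_pos (by positivity) (hP hy)) (hP one_pos))
    (by simp [f, (hP one_pos).ne']) hs
  have hP1 := (hP one_pos).ne'
  rw [← hf, ← neg_sub s 1, rpow_neg hm'.le]
  simp only [f, P] at hP1 ⊢
  field_simp

lemma Gamma_one_third_mul_Gamma_two_thirds : Gamma (1 / 3) * Gamma (2 / 3) = 2 * π / √3 := by
  have h := Gamma_mul_Gamma_one_sub (1 / 3)
  rw [mul_one_div, sin_pi_div_three, show (1 : ℝ) - 1 / 3 = 2 / 3 by norm_num] at h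
  rw [h]
  field

theorem Gamma_div_three_mul_Gamma_mul_Gamma {s : ℝ} (hs : 0 < s) :
    Gamma (s / 3) * Gamma ((s + 1) / 3) * Gamma ((s + 2) / 3)
      = 2 * π * 3 ^ (1 / 2 - s) * Gamma s := by
  have h := prod_Gamma_add_div three_ne_zero hs
  norm_num [Finset.prod_range_succ] at h
  have h3 : (3 : ℝ) ^ (1 - s) = 3 ^ (1 / 2 - s) * √3 := by
    rw [sqrt_eq_rpow, ← rpow_add three_pos]
    ring_nf
  rw [h, Gamma_one_third_mul_Gamma_two_thirds, h3]
  field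

lemma prod_range_sub_mul_Gamma {a : ℝ} {n : ℕ} (ha : ∀ i < n, a ≠ i) :
    (∏ i ∈ Finset.range n, (a - i)) * Gamma (a - n + 1) = Gamma (a + 1) := by
  induction n with
  | zero => simp
  | succ n ih =>
    rw [Finset.prod_range_succ, mul_assoc, Nat.cast_succ, sub_add_eq_sub_sub, sub_add_cancel,
      ← Gamma_add_one (sub_ne_zero.2 (ha n n.lt_succ_self)),
      ih fun i hi ↦ ha i (hi.trans n.lt_succ_self)]

theorem gbinom_eq_Gamma_div {a : ℝ} {n : ℕ} (ha : n - 1 < a) :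
    gbinom a n = Gamma (a + 1) / (Gamma (n + 1) * Gamma (a - n + 1)) := by
  have hne (i : ℕ) (hi : i < n) : a ≠ i := by
    have : (i : ℝ) + 1 ≤ n := by exact_mod_cast hi
    linarith
  rw [gbinom, Gamma_nat_eq_factorial, ← prod_range_sub_mul_Gamma hne,
    mul_div_mul_right _ _ (Gamma_pos_of_pos (by linarith)).ne']

/-- The integrand of Euler's beta integral `∫₀¹ p ^ (a - 1) (1 - p) ^ (b - 1) dp`. -/
noncomputable def betaKernel (a b p : ℝ) : ℝ :=
  p ^ (a - 1) * (1 - p) ^ (b - 1)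

lemma ofReal_betaKernel (a b : ℝ) {p : ℝ} (hp : p ∈ Set.Icc 0 1) :
    (betaKernel a b p : ℂ) = (p : ℂ) ^ ((a : ℂ) - 1) * (1 - (p : ℂ)) ^ ((b : ℂ) - 1) := by
  rw [betaKernel, Complex.ofReal_mul, Complex.ofReal_cpow hp.1,
    Complex.ofReal_cpow (sub_nonneg.2 hp.2)]
  push_cast
  rfl

theorem intervalIntegrable_betaKernel {a b : ℝ} (ha : 0 < a) (hb : 0 < b) :
    IntervalIntegrable (betaKernel a b) volume 0 1 := by
  have h := Complex.betaIntegral_convergent (u := a) (v := b) (by simpa) (by simpa)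
  rw [intervalIntegrable_iff_integrableOn_Ioc_of_le zero_le_one] at h ⊢
  refine IntegrableOn.congr_fun h.re (fun p hp ↦ ?_) measurableSet_Ioc
  simp only [← ofReal_betaKernel a b (Set.Ioc_subset_Icc_self hp), RCLike.re_to_complex,
    Complex.ofReal_re]

theorem integral_betaKernel {a b : ℝ} (ha : 0 < a) (hb : 0 < b) :
    ∫ p in (0 : ℝ)..1, betaKernel a b p = ProbabilityTheory.beta a b := by
  rw [ProbabilityTheory.beta_eq_betaIntegralReal a b ha hb, Complex.betaIntegral,
    ← intervalIntegral.integral_congr fun p hp ↦ ofReal_betaKernel a b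
      (Set.uIcc_of_le (zero_le_one' ℝ) ▸ hp),
    intervalIntegral.integral_ofReal, Complex.ofReal_re]

theorem integral_add_reflect {E : Type*} [NormedAddCommGroup E] [NormedSpace ℝ E] {f : ℝ → E}
    {a b : ℝ} (hf : IntervalIntegrable f volume a b) :
    ∫ x in a..(a + b) / 2, (f x + f (a + b - x)) = ∫ x in a..b, f x := by
  have hmid : (a + b) / 2 ∈ Set.uIcc a b := by
    rw [Set.mem_uIcc]
    grind
  have hleft : IntervalIntegrable f volume a ((a + b) / 2) :=
    hf.mono_set (Set.uIcc_subset_uIcc_left hmid)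
  have hright : IntervalIntegrable f volume ((a + b) / 2) b :=
    hf.mono_set (Set.uIcc_subset_uIcc_right hmid)
  have hreflect : IntervalIntegrable (fun x ↦ f (a + b - x)) volume a ((a + b) / 2) := by
    simpa [show a + b - (a + b) / 2 = (a + b) / 2 by ring] using (hright.comp_sub_left (a + b)).symm
  rw [intervalIntegral.integral_add hleft hreflect, intervalIntegral.integral_comp_sub_left,
    add_sub_cancel_left, sub_half, intervalIntegral.integral_add_adjacent_intervals hleft hright]

/-- The algebraic substitution `x = √(27 p (1 - p))`, which maps `[0, 1/2]` onto `[0, √27 / 2]` and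
turns `4 x² / 27` into `4 p (1 - p)`, so that `√(1 - 4 x² / 27) = 1 - 2 p` is rational in `p`. -/
noncomputable def V320Param (p : ℝ) : ℝ :=
  √(27 * (p * (1 - p)))

lemma hasDerivAt_V320Param {p : ℝ} (hp : p ∈ Set.Ioo 0 1) :
    HasDerivAt V320Param (27 * (1 - 2 * p) / (2 * V320Param p)) p := by
  have h : HasDerivAt (fun p : ℝ ↦ 27 * (p * (1 - p))) (27 * (1 - 2 * p)) p := by
    convert! ((hasDerivAt_id' p).mul ((hasDerivAt_id' p).const_sub 1)).const_mul 27 using 1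
    ring
  exact h.sqrt (mul_pos (by norm_num) (mul_pos hp.1 (sub_pos.2 hp.2))).ne'

lemma V320Param_rpow {p : ℝ} (hp : p ∈ Set.Icc 0 1) (r : ℝ) :
    V320Param p ^ r = 27 ^ (r / 2) * (p ^ (r / 2) * (1 - p) ^ (r / 2)) := by
  have hq := sub_nonneg.2 hp.2
  rw [V320Param, sqrt_eq_rpow, ← rpow_mul (by have := hp.1; positivity), one_div_mul_eq_div,
    mul_rpow (by norm_num) (mul_nonneg hp.1 hq), mul_rpow hp.1 hq]

lemma rpow_two_mul_mul_rpow_neg {a b : ℝ} (ha : 0 ≤ a) (hb : 0 ≤ b) (r : ℝ) :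
    a ^ (2 * r) * b ^ (-r) = (a ^ 2 / b) ^ r := by
  rw [div_rpow (sq_nonneg a) hb, rpow_mul ha, rpow_two, rpow_neg hb, div_eq_mul_inv]

lemma V320_V320Param {p : ℝ} (hp : p ∈ Set.Ioo 0 (1 / 2)) :
    V320 (V320Param p)
      = (((1 - p) / p) ^ (1 / 6 : ℝ) + ((1 - p) / p) ^ (-1 / 6 : ℝ)) / (3 * π * (1 - 2 * p)) := by
  obtain ⟨hp0, hp2⟩ := hp
  have hq : 0 < 1 - p := by linarith
  have hz : 4 * V320Param p ^ 2 / 27 = 4 * p * (1 - p) := by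
    rw [V320Param, sq_sqrt (by positivity)]
    ring
  have hsqrt : √(1 - 4 * p * (1 - p)) = 1 - 2 * p := by
    rw [show 1 - 4 * p * (1 - p) = (1 - 2 * p) ^ 2 by ring, sqrt_sq (by linarith)]
  have hpow (r : ℝ) : (2 * (1 - p)) ^ (2 * r) * (4 * p * (1 - p)) ^ (-r) = ((1 - p) / p) ^ r := by
    rw [rpow_two_mul_mul_rpow_neg (by positivity) (by positivity)]
    congr 1
    field
  rw [V320, hz, hsqrt, show 1 + (1 - 2 * p) = 2 * (1 - p) by ring, ← add_div, ← hpow, ← hpow]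
  norm_num

lemma V320Param_rpow_mul_V320_mul_deriv (s : ℝ) {p : ℝ} (hp : p ∈ Set.Ioo 0 (1 / 2)) :
    V320Param p ^ s * V320 (V320Param p) * (27 * (1 - 2 * p) / (2 * V320Param p))
      = 27 ^ ((s + 1) / 2) / (6 * π) * (betaKernel (s / 2 + 2 / 3) (s / 2 + 1 / 3) p
        + betaKernel (s / 2 + 2 / 3) (s / 2 + 1 / 3) (1 - p)) := by
  have hp0 := hp.1
  have hq : 0 < 1 - p := by linarith [hp.2]
  have hd : 1 - 2 * p ≠ 0 := by linarith [hp.2]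
  have hx : 0 < V320Param p := sqrt_pos.2 (by positivity)
  have hratio (r : ℝ) : p ^ ((s - 1) / 2) * (1 - p) ^ ((s - 1) / 2) * ((1 - p) / p) ^ r
      = p ^ ((s - 1) / 2 - r) * (1 - p) ^ ((s - 1) / 2 + r) := by
    rw [div_rpow hq.le hp0.le, rpow_sub hp0, rpow_add hq]
    ring
  calc V320Param p ^ s * V320 (V320Param p) * (27 * (1 - 2 * p) / (2 * V320Param p))
      = 27 / (6 * π) * (V320Param p ^ (s - 1)
          * (((1 - p) / p) ^ (1 / 6 : ℝ) + ((1 - p) / p) ^ (-1 / 6 : ℝ))) := by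
        rw [V320_V320Param hp, rpow_sub_one hx.ne']
        field
    _ = 27 ^ ((s + 1) / 2) / (6 * π)
          * (p ^ ((s - 1) / 2 - 1 / 6) * (1 - p) ^ ((s - 1) / 2 + 1 / 6)
            + p ^ ((s - 1) / 2 - -1 / 6) * (1 - p) ^ ((s - 1) / 2 + -1 / 6)) := by
        rw [V320Param_rpow ⟨hp0.le, by linarith⟩, ← hratio, ← hratio,
          show (s + 1) / 2 = (s - 1) / 2 + 1 by ring, rpow_add_one (by norm_num)]
        ring
    _ = 27 ^ ((s + 1) / 2) / (6 * π) * (betaKernel (s / 2 + 2 / 3) (s / 2 + 1 / 3) p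
          + betaKernel (s / 2 + 2 / 3) (s / 2 + 1 / 3) (1 - p)) := by
        rw [betaKernel, betaKernel, sub_sub_cancel]
        ring_nf

lemma V320Param_zero : V320Param 0 = 0 := by
  simp [V320Param]

lemma V320Param_one_half : V320Param (1 / 2) = √27 / 2 := by
  rw [V320Param, show (27 : ℝ) * (1 / 2 * (1 - 1 / 2)) = 27 / 2 ^ 2 by norm_num,
    sqrt_div (by norm_num), sqrt_sq (by norm_num)]

lemma integral_comp_V320Param_mul_deriv (g : ℝ → ℝ) :
    ∫ p in (0 : ℝ)..1 / 2, g (V320Param p) * (27 * (1 - 2 * p) / (2 * V320Param p))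
      = ∫ x in (0 : ℝ)..√27 / 2, g x := by
  have hIoo : Set.Ioo (min 0 (1 / 2 : ℝ)) (max 0 (1 / 2)) = Set.Ioo 0 (1 / 2) := by norm_num
  have hcont : Continuous V320Param := by
    unfold V320Param
    fun_prop
  have h := intervalIntegral.integral_comp_mul_deriv_of_deriv_nonneg (a := 0) (b := 1 / 2)
    (f' := fun p ↦ 27 * (1 - 2 * p) / (2 * V320Param p)) (g := g) hcont.continuousOn
    (fun p hp ↦ hasDerivAt_V320Param ?_) fun p hp ↦ ?_
  · rwa [V320Param_zero, V320Param_one_half] at h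
  · rw [hIoo] at hp
    exact ⟨hp.1, by linarith [hp.2]⟩
  · rw [hIoo] at hp
    exact div_nonneg (by linarith [hp.2]) (mul_nonneg zero_le_two (sqrt_nonneg _))

theorem integral_rpow_mul_V320 {s : ℝ} (hs : -2 / 3 < s) :
    ∫ x in (0 : ℝ)..√27 / 2, x ^ s * V320 x
      = 27 ^ ((s + 1) / 2) / (6 * π) * ProbabilityTheory.beta (s / 2 + 2 / 3) (s / 2 + 1 / 3) := by
  have ha : 0 < s / 2 + 2 / 3 := by linarith
  have hb : 0 < s / 2 + 1 / 3 := by linarith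
  rw [← integral_comp_V320Param_mul_deriv,
    intervalIntegral.integral_congr_Ioo_of_le (by norm_num) fun p hp ↦
      V320Param_rpow_mul_V320_mul_deriv s hp,
    intervalIntegral.integral_const_mul, ← integral_betaKernel ha hb,
    ← integral_add_reflect (intervalIntegrable_betaKernel ha hb), zero_add]

theorem density_p_three_halves_general {s : ℝ} (hs : -2 / 3 < s) :
    ∫ x in (0 : ℝ)..√27 / 2, x ^ s * V320 x
      = Gamma (3 * s / 2 + 1) / (Gamma (s + 1) * Gamma (s / 2 + 1)) := by
  have htri : Gamma (s / 2 + 1 / 3) * Gamma (s / 2 + 2 / 3) * Gamma (s / 2 + 1)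
      = 2 * π * 3 ^ (1 / 2 - (3 * s / 2 + 1)) * Gamma (3 * s / 2 + 1) := by
    rw [← Gamma_div_three_mul_Gamma_mul_Gamma (by linarith)]
    ring_nf
  have hpow : (27 : ℝ) ^ ((s + 1) / 2) * 3 ^ (1 / 2 - (3 * s / 2 + 1)) = 3 := by
    rw [show (27 : ℝ) = 3 ^ (3 : ℝ) by norm_num, ← rpow_mul three_pos.le, ← rpow_add three_pos]
    ring_nf
    exact rpow_one 3
  have hΓ : Gamma (s / 2 + 1) ≠ 0 := (Gamma_pos_of_pos (by linarith)).ne'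
  have hbeta : 27 ^ ((s + 1) / 2) / (6 * π) * (Gamma (s / 2 + 1 / 3) * Gamma (s / 2 + 2 / 3))
      = Gamma (3 * s / 2 + 1) / Gamma (s / 2 + 1) := by
    rw [eq_div_iff hΓ, mul_assoc, htri, div_mul_eq_mul_div, div_eq_iff (by positivity)]
    linear_combination 2 * π * Gamma (3 * s / 2 + 1) * hpow
  rw [integral_rpow_mul_V320 hs, ProbabilityTheory.beta,
    show s / 2 + 2 / 3 + (s / 2 + 1 / 3) = s + 1 by ring, mul_comm (Gamma (s / 2 + 2 / 3)),
    ← mul_div_assoc, hbeta, div_div, mul_comm (Gamma (s + 1))]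

theorem density_p_three_halves (n : ℕ) :
    (∫ x in (0:ℝ)..(Real.sqrt 27 / 2), x ^ n * V320 x)
      = gbinom (3 * (n : ℝ) / 2) n := by
  have hn : (n : ℝ) - 1 < 3 * n / 2 := by linarith [n.cast_nonneg (α := ℝ)]
  rw [gbinom_eq_Gamma_div hn, show 3 * (n : ℝ) / 2 - n = n / 2 by ring]
  exact_mod_cast density_p_three_halves_general (s := n) (by linarith [n.cast_nonneg (α := ℝ)])
end
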